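/- Assume the vertex c is controllable. Then for every operator P ∈ 𝓕 = span{G, G², …, G^{d+1}}, the vector field ∑_{v∈D^d} (P f̃_v)(x_v) ∂_{p_v} belongs to 𝓜. -/

import Mathlib

/-!
For a family of polynomials `g = (g_v)` with `g_c = 0`, let `Y_g = ∑_v g_v(x_v) ∂_{p_v}`, and call
`g` admissible if `Y_g ∈ 𝓜`. Admissible families form a vector space with three further properties:

* `(f̃_v)_{v ∈ 𝒯}`, extended by zero, is admissible: up to a smooth multiple of `∂_{p_c}`,
  its field is `[∂_{q_c}, X₀]` (`adm_ft`);
* `g ↦ (g_v')_v` preserves admissibility, because `[∂_{q_c}, Y_g] = Y_{g'}` (`Adm.derivative`);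
* `(g, h) ↦ ((g_v h_v)')_v` preserves admissibility, because
  `[[Y_g, X₀], Y_h] = -Y_{(g h)'}` (`Adm.mul_derivative`).

Since `G q = (X q)'`, it suffices to show that the family equal to `X` on `D^d` and `0` elsewhere is
admissible (`adm_X`): multiplying `f̃` repeatedly by it, in the sense of the third property, gives
the families `G^k f̃_v` on `D^d` for all `k ≥ 1`. Now let `h` be the `(d-1)`-st derivative of `f̃`.
As `f̃_v` is adjusted, `h_v = b_v X` with `b_v ≠ 0` on `D^d`, whereas `h_v` is constant elsewhere.
Hence `(h h)'` is `2 b_v² X` on `D^d` and `0` elsewhere, and further products with `h` give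
`b_v^k X` for all `k ≥ 2`. A linear combination given by a polynomial interpolating `t ↦ t⁻²` at
the numbers `b_v` equals `X` on `D^d`.
-/

open scoped Classical
open Polynomial

noncomputable section

/-- Phase space ℝ^{2|V|}: positions `q = x.1` and momenta `p = x.2`. -/
abbrev Phase (V : Type) := (V → ℝ) × (V → ℝ)

/-- Lie bracket of vector fields: `[Y,Z](x) = DZ(x)·Y(x) − DY(x)·Z(x)`. -/
def lieB {V : Type} [Fintype V] (Y Z : Phase V → Phase V) : Phase V → Phase V :=
  fun x => fderiv ℝ Z x (Y x) - fderiv ℝ Y x (Z x)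

/-- The constant vector field `∂_{p_v}`. -/
def dp {V : Type} [Fintype V] [DecidableEq V] (v : V) : Phase V → Phase V :=
  fun _ => (0, Pi.single v 1)

/-- The constant vector field `∂_{q_v}`. -/
def dq {V : Type} [Fintype V] [DecidableEq V] (v : V) : Phase V → Phase V :=
  fun _ => (Pi.single v 1, 0)

/-- The constant vector field `∑_{v ∈ A} ∂_{p_v}`. -/
def dpSum {V : Type} [Fintype V] [DecidableEq V] (A : Finset V) : Phase V → Phase V :=
  fun _ => (0, ∑ v ∈ A, Pi.single v 1)

/-- The constant vector field `∑_{v ∈ A} ∂_{q_v}`. -/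
def dqSum {V : Type} [Fintype V] [DecidableEq V] (A : Finset V) : Phase V → Phase V :=
  fun _ => (∑ v ∈ A, Pi.single v 1, 0)

/-- The drift vector field
`X₀ = −∑_{v∈V*} γ_v p_v ∂_{p_v} + ∑_{v∈V} (p_v ∂_{q_v} − U_v'(q_v) ∂_{p_v})
      − ∑_{{u,v}∈E} V_{uv}'(q_u − q_v)(∂_{p_u} − ∂_{p_v})`,
written componentwise (using the symmetry `V_{vu}(x) = V_{uv}(−x)` of the
interaction potentials, the `∂_{p_v}`-component of the edge term at a vertex `v` is
`−∑_{w ~ v} V_{vw}'(q_v − q_w)`). -/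
def X0 {V : Type} [Fintype V] [DecidableEq V] (G : SimpleGraph V) [DecidableRel G.Adj]
    (γ : V → ℝ) (U : V → ℝ → ℝ) (Vp : V → V → Polynomial ℝ) : Phase V → Phase V :=
  fun x =>
    (x.2, fun v =>
      -(γ v) * x.2 v - deriv (U v) (x.1 v) -
        ∑ w ∈ Finset.univ.filter (fun w => G.Adj v w),
          (derivative (Vp v w)).eval (x.1 v - x.1 w))

/-- The smallest collection `𝓜` of vector fields on `ℝ^{2|V|}` that contains `∂_{p_v}`
for every `v ∈ V*`, and is closed under linear combinations, Lie brackets,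
bracketing with `X₀`, and multiplication by smooth scalar functions. -/
inductive MM {V : Type} [Fintype V] [DecidableEq V] (Vstar : Finset V)
    (X₀ : Phase V → Phase V) : (Phase V → Phase V) → Prop
  | basic (v : V) (hv : v ∈ Vstar) : MM Vstar X₀ (dp v)
  | add {Y Z : Phase V → Phase V} : MM Vstar X₀ Y → MM Vstar X₀ Z → MM Vstar X₀ (Y + Z)
  | smul (a : ℝ) {Y : Phase V → Phase V} : MM Vstar X₀ Y → MM Vstar X₀ (a • Y)
  | lie {Y Z : Phase V → Phase V} : MM Vstar X₀ Y → MM Vstar X₀ Z → MM Vstar X₀ (lieB Y Z)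
  | lieX {Y : Phase V → Phase V} : MM Vstar X₀ Y → MM Vstar X₀ (lieB Y X₀)
  | mulS (f : Phase V → ℝ) (hf : ContDiff ℝ (⊤ : ℕ∞) f) {Y : Phase V → Phase V} :
      MM Vstar X₀ Y → MM Vstar X₀ (fun x => f x • Y x)

/-- A vertex `v` is controllable if `∂_{q_v} ∈ 𝓜` and `∂_{p_v} ∈ 𝓜`. -/
def Controllable {V : Type} [Fintype V] [DecidableEq V] (Vstar : Finset V)
    (X₀ : Phase V → Phase V) (v : V) : Prop :=
  MM Vstar X₀ (dq v) ∧ MM Vstar X₀ (dp v)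

/-- Two polynomials are equivalent if `f(·) = g(· + δ)` for some `δ ∈ ℝ`. -/
def PolyEquiv (f g : Polynomial ℝ) : Prop :=
  ∃ δ : ℝ, ∀ x : ℝ, f.eval x = g.eval (x + δ)

/-- The set 𝒯 of neighbors ("targets") of a vertex `c`. -/
def Tset {V : Type} [Fintype V] [DecidableEq V] (G : SimpleGraph V) [DecidableRel G.Adj]
    (c : V) : Finset V :=
  Finset.univ.filter fun w => G.Adj c w

/-- The shift making a polynomial `g = ∑ a_i t^i/i!` of degree `k` adjusted
(i.e. killing the coefficient `a_{k−1}`), namely `a_{k−1}/a_k = coeff_{k−1}/(k·coeff_k)`. -/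
def adjShift (g : Polynomial ℝ) : ℝ :=
  g.coeff (g.natDegree - 1) / ((g.natDegree : ℝ) * g.leadingCoeff)

/-- The adjusted representation `g̃(·) = g(· − a_{k−1}/a_k)` of a polynomial `g`. -/
def adjRep (g : Polynomial ℝ) : Polynomial ℝ :=
  g.comp (Polynomial.X - Polynomial.C (adjShift g))

/-- `f̃_v`, the adjusted representation of `V''_{cv}`. -/
def ft {V : Type} (Vp : V → V → Polynomial ℝ) (c v : V) : Polynomial ℝ :=
  adjRep (derivative (derivative (Vp c v)))

/-- `d = max_{v∈𝒯} d_v`, the maximal degree of the adjusted polynomials `f̃_v`, `v ∈ 𝒯`. -/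
def dmax {V : Type} [Fintype V] [DecidableEq V] (G : SimpleGraph V) [DecidableRel G.Adj]
    (Vp : V → V → Polynomial ℝ) (c : V) : ℕ :=
  (Tset G c).sup fun v => (ft Vp c v).natDegree

/-- `D^d = {v ∈ 𝒯 : d_v = d}`, the neighbors of `c` of maximal adjusted degree. -/
def Dd {V : Type} [Fintype V] [DecidableEq V] (G : SimpleGraph V) [DecidableRel G.Adj]
    (Vp : V → V → Polynomial ℝ) (c : V) : Finset V :=
  (Tset G c).filter fun v => (ft Vp c v).natDegree = dmax G Vp c

/-- The coefficient `b_{vℓ}` in `f̃_v(x) = ∑_j b_{vj} x^j/j!`, i.e. `b_{vℓ} = ℓ!·coeff_ℓ(f̃_v)`. -/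
def bcoef {V : Type} (Vp : V → V → Polynomial ℝ) (c v : V) (ℓ : ℕ) : ℝ :=
  (Nat.factorial ℓ : ℝ) * (ft Vp c v).coeff ℓ

/-- The scalar function `x_v = q_c − q_v + δ_{cv}`, with `δ_{cv}` the adjusting shift
of `V''_{cv}`. -/
def xv {V : Type} [Fintype V] (Vp : V → V → Polynomial ℝ) (c v : V) : Phase V → ℝ :=
  fun x => x.1 c - x.1 v + adjShift (derivative (derivative (Vp c v)))

/-- The operator `G v = (x·v(x))'` preserves polynomials of degree at most `d`. -/
lemma Gmem {d : ℕ} {p : Polynomial ℝ} (hp : p ∈ Polynomial.degreeLE ℝ (d : ℕ)) :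
    derivative (Polynomial.X * p) ∈ Polynomial.degreeLE ℝ (d : ℕ) := by
  rw [Polynomial.mem_degreeLE, Polynomial.degree_le_iff_coeff_zero] at hp ⊢
  intro m hm
  rw [Polynomial.coeff_derivative, Polynomial.coeff_X_mul, hp m hm, zero_mul]

/-- The operator `G : P_d → P_d`, `(G v)(x) = (x·v(x))'`, on the space `P_d` of
polynomials of degree at most `d`. -/
def Gop (d : ℕ) : Module.End ℝ (Polynomial.degreeLE ℝ (d : ℕ)) where
  toFun p := ⟨derivative (Polynomial.X * (p : Polynomial ℝ)), Gmem p.2⟩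
  map_add' p q := by
    apply Subtype.ext
    simp [mul_add]
  map_smul' a p := by
    apply Subtype.ext
    simp [mul_smul_comm]

/-- The family `𝓕 = span{G, G², …, G^{d+1}}` of operators on `P_d`. -/
def Fspan (d : ℕ) : Submodule ℝ (Module.End ℝ (Polynomial.degreeLE ℝ (d : ℕ))) :=
  Submodule.span ℝ ((fun k : ℕ => Gop d ^ k) '' Set.Icc 1 (d + 1))

/-- `f̃_v` viewed as an element of `P_d` (for `v ∈ 𝒯` its degree is indeed at most `d`,
so the junk case of the `dite` does not occur there). -/
def ftSub {V : Type} [Fintype V] [DecidableEq V] (G : SimpleGraph V) [DecidableRel G.Adj]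
    (Vp : V → V → Polynomial ℝ) (c v : V) :
    Polynomial.degreeLE ℝ ((dmax G Vp c : ℕ) : WithBot ℕ) :=
  if hv : (ft Vp c v).degree ≤ ((dmax G Vp c : ℕ) : WithBot ℕ) then
    ⟨ft Vp c v, Polynomial.mem_degreeLE.2 hv⟩
  else 0

/-! ### Directional derivatives and Lie brackets -/

lemma fderiv_apply_of_line {V : Type} [Fintype V] {F : Phase V → Phase V} {x y w : Phase V}
    (hF : DifferentiableAt ℝ F x) (h : HasDerivAt (fun t : ℝ => F (x + t • y)) w 0) :
    fderiv ℝ F x y = w := by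
  rw [← hF.lineDeriv_eq_fderiv]
  exact h.deriv

/-- The vector field `∑_v g_v(x_v) ∂_{p_v}` attached to a family of polynomials `g`. -/
def polyField {V : Type} [Fintype V] (Vp : V → V → Polynomial ℝ) (c : V)
    (g : V → Polynomial ℝ) : Phase V → Phase V :=
  fun x => (0, fun v => (g v).eval (xv Vp c v x))

lemma contDiff_eval (p : Polynomial ℝ) : ContDiff ℝ (⊤ : ℕ∞) (fun t : ℝ => p.eval t) := by
  simpa using p.contDiff_aeval (𝕜 := ℝ) (⊤ : ℕ∞)

lemma contDiff_X0 {V : Type} [Fintype V] [DecidableEq V] (G : SimpleGraph V) [DecidableRel G.Adj]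
    (γ : V → ℝ) (U : V → ℝ → ℝ) (Vp : V → V → Polynomial ℝ)
    (hU : ∀ v, ContDiff ℝ (⊤ : ℕ∞) (U v)) :
    ContDiff ℝ (⊤ : ℕ∞) (X0 G γ U Vp) := by
  have hU' : ∀ v, ContDiff ℝ (⊤ : ℕ∞) (deriv (U v)) := fun v => by
    exact (contDiff_infty_iff_deriv.1 (hU v)).2
  have hp : ∀ p : Polynomial ℝ, ContDiff ℝ (⊤ : ℕ∞) (fun t : ℝ => p.eval t) :=
    contDiff_eval
  unfold X0
  refine contDiff_snd.prodMk (contDiff_pi.2 fun v => ?_)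
  refine ContDiff.sub (ContDiff.sub (by fun_prop) ?_) (ContDiff.sum fun w _ => ?_)
  · exact (hU' v).comp (by fun_prop)
  · exact (hp _).comp (by fun_prop)

lemma contDiff_polyField {V : Type} [Fintype V] (Vp : V → V → Polynomial ℝ) (c : V)
    (g : V → Polynomial ℝ) : ContDiff ℝ (⊤ : ℕ∞) (polyField Vp c g) := by
  have hp : ∀ p : Polynomial ℝ, ContDiff ℝ (⊤ : ℕ∞) (fun t : ℝ => p.eval t) :=
    contDiff_eval
  unfold polyField xv
  refine contDiff_const.prodMk (contDiff_pi.2 fun v => ?_)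
  exact (hp _).comp (by fun_prop)

lemma fderiv_polyField {V : Type} [Fintype V] (Vp : V → V → Polynomial ℝ) (c : V)
    (g : V → Polynomial ℝ) (x y : Phase V) :
    fderiv ℝ (polyField Vp c g) x y =
      (0, fun v => (derivative (g v)).eval (xv Vp c v x) * (y.1 c - y.1 v)) := by
  refine fderiv_apply_of_line ((contDiff_polyField Vp c g).differentiable (by simp) x) ?_
  refine (hasDerivAt_const _ _).prodMk (hasDerivAt_pi.2 fun v => ?_)
  have h1 : HasDerivAt (fun t : ℝ => xv Vp c v (x + t • y)) (y.1 c - y.1 v) 0 := by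
    have h0 : ∀ w, HasDerivAt (fun t : ℝ => x.1 w + t * y.1 w) (y.1 w) 0 := fun w => by
      simpa using ((hasDerivAt_id (0 : ℝ)).mul_const (y.1 w)).const_add (x.1 w)
    simpa [xv] using ((h0 c).sub (h0 v)).add_const
      (adjShift (Polynomial.derivative (Polynomial.derivative (Vp c v))))
  have h2 := ((g v).hasDerivAt (xv Vp c v (x + (0 : ℝ) • y))).comp (0 : ℝ) h1
  simpa [Function.comp_def] using h2

lemma fderiv_X0_vertical {V : Type} [Fintype V] [DecidableEq V] (G : SimpleGraph V)
    [DecidableRel G.Adj] (γ : V → ℝ) (U : V → ℝ → ℝ) (Vp : V → V → Polynomial ℝ)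
    (hU : ∀ v, ContDiff ℝ (⊤ : ℕ∞) (U v)) (x : Phase V) (y : V → ℝ) :
    fderiv ℝ (X0 G γ U Vp) x (0, y) = (y, fun v => -(γ v) * y v) := by
  refine fderiv_apply_of_line ((contDiff_X0 G γ U Vp hU).differentiable (by simp) x) ?_
  have h0 : ∀ w, HasDerivAt (fun t : ℝ => x.2 w + t * y w) (y w) 0 := fun w => by
    simpa using ((hasDerivAt_id (0 : ℝ)).mul_const (y w)).const_add (x.2 w)
  refine HasDerivAt.prodMk (hasDerivAt_pi.2 fun v => ?_) (hasDerivAt_pi.2 fun v => ?_)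
  · simpa using h0 v
  · simpa [X0] using (((h0 v).const_mul (-(γ v))).sub_const (deriv (U v) (x.1 v))).sub_const
      (∑ w ∈ Finset.univ.filter (fun w => G.Adj v w),
        (derivative (Vp v w)).eval (x.1 v - x.1 w))

lemma lieB_polyField_X0 {V : Type} [Fintype V] [DecidableEq V] (G : SimpleGraph V)
    [DecidableRel G.Adj] (γ : V → ℝ) (U : V → ℝ → ℝ) (Vp : V → V → Polynomial ℝ)
    (hU : ∀ v, ContDiff ℝ (⊤ : ℕ∞) (U v)) (c : V) (g : V → Polynomial ℝ) :
    lieB (polyField Vp c g) (X0 G γ U Vp) = fun x =>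
      (fun v => (g v).eval (xv Vp c v x), fun v => -(γ v) * (g v).eval (xv Vp c v x) -
        (derivative (g v)).eval (xv Vp c v x) * (x.2 c - x.2 v)) := by
  funext x
  unfold lieB
  rw [fderiv_polyField]
  have := fderiv_X0_vertical G γ U Vp hU x (fun v => (g v).eval (xv Vp c v x))
  rw [polyField, this]
  ext v <;> simp [X0]

/-- Up to sign, bracketing with `[·, X₀]` realises the product `(g, h) ↦ (g h)'` on families of
polynomials. The friction terms drop out since they depend on positions only. -/
lemma lieB_lieB_polyField {V : Type} [Fintype V] [DecidableEq V] (G : SimpleGraph V)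
    [DecidableRel G.Adj] (γ : V → ℝ) (U : V → ℝ → ℝ) (Vp : V → V → Polynomial ℝ)
    (hU : ∀ v, ContDiff ℝ (⊤ : ℕ∞) (U v)) (c : V) (g h : V → Polynomial ℝ)
    (hg : g c = 0) (hh : h c = 0) :
    lieB (lieB (polyField Vp c g) (X0 G γ U Vp)) (polyField Vp c h) =
      (-1 : ℝ) • polyField Vp c (fun v => derivative (g v * h v)) := by
  rw [lieB_polyField_X0 G γ U Vp hU]
  funext x
  have hp : ∀ p : Polynomial ℝ, ContDiff ℝ (⊤ : ℕ∞) (fun t : ℝ => p.eval t) :=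
    contDiff_eval
  have hD : ContDiff ℝ (⊤ : ℕ∞) (fun x : Phase V =>
      ((fun v => (g v).eval (xv Vp c v x), fun v => -(γ v) * (g v).eval (xv Vp c v x) -
        (derivative (g v)).eval (xv Vp c v x) * (x.2 c - x.2 v)) : Phase V)) := by
    unfold xv
    have hx : ∀ (p : Polynomial ℝ) (v : V), ContDiff ℝ (⊤ : ℕ∞) (fun x : Phase V =>
        p.eval (x.1 c - x.1 v + adjShift (derivative (derivative (Vp c v))))) :=
      fun p v => (hp p).comp (by fun_prop)
    exact (contDiff_pi.2 fun v => hx _ v).prodMk (contDiff_pi.2 fun v =>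
      ((hx _ v).const_smul (-(γ v))).sub ((hx _ v).mul (by fun_prop)))
  have key : fderiv ℝ (fun x : Phase V =>
      ((fun v => (g v).eval (xv Vp c v x), fun v => -(γ v) * (g v).eval (xv Vp c v x) -
        (derivative (g v)).eval (xv Vp c v x) * (x.2 c - x.2 v)) : Phase V)) x
        (polyField Vp c h x) =
      (0, fun v => (derivative (g v)).eval (xv Vp c v x) * (h v).eval (xv Vp c v x)) := by
    refine fderiv_apply_of_line (hD.differentiable (by simp) x) ?_
    have hxv : ∀ (t : ℝ) v, xv Vp c v (x + t • polyField Vp c h x) = xv Vp c v x := by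
      intro t v; simp [xv, polyField]
    simp only [hxv]
    refine (hasDerivAt_const _ _).prodMk (hasDerivAt_pi.2 fun v => ?_)
    have h0 : ∀ w, HasDerivAt (fun t : ℝ => x.2 w + t * (h w).eval (xv Vp c w x))
        ((h w).eval (xv Vp c w x)) 0 := fun w => by
      simpa using ((hasDerivAt_id (0 : ℝ)).mul_const ((h w).eval (xv Vp c w x))).const_add (x.2 w)
    have := (((h0 c).sub (h0 v)).const_mul
      ((derivative (g v)).eval (xv Vp c v x))).const_sub (-(γ v) * (g v).eval (xv Vp c v x))
    simpa [polyField, hh] using this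
  unfold lieB
  rw [key, fderiv_polyField]
  ext v
  · simp [polyField]
  · simp [polyField, hg]; ring

lemma fderiv_dq {V : Type} [Fintype V] [DecidableEq V] (c : V) (x : Phase V) :
    fderiv ℝ (dq c : Phase V → Phase V) x = 0 := by
  unfold dq
  simp

lemma lieB_dq_polyField {V : Type} [Fintype V] [DecidableEq V] (Vp : V → V → Polynomial ℝ)
    (c : V) (g : V → Polynomial ℝ) (hg : g c = 0) :
    lieB (dq c) (polyField Vp c g) = polyField Vp c (fun v => derivative (g v)) := by
  funext x
  unfold lieB
  rw [fderiv_polyField, fderiv_dq]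
  ext v
  · simp [polyField, dq]
  · by_cases hv : v = c
    · subst hv; simp [polyField, dq, hg]
    · simp [polyField, dq, hv]

lemma eval_adjRep (g : Polynomial ℝ) (t : ℝ) : (adjRep g).eval (t + adjShift g) = g.eval t := by
  simp [adjRep]

lemma eval_second_derivative_symm (p q : Polynomial ℝ) (h : ∀ x : ℝ, q.eval x = p.eval (-x))
    (t : ℝ) : (derivative (derivative q)).eval t = (derivative (derivative p)).eval (-t) := by
  have : q = p.comp (-X) := Polynomial.funext fun x => by simp [h]
  subst this
  simp [derivative_comp]

/-- The `p_v`-component of `[∂_{q_c}, X₀]` for `v ≠ c` is `V''_{cv}(q_c - q_v)` if `v ~ c`, and `0`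
otherwise. -/
lemma fderiv_X0_dq {V : Type} [Fintype V] [DecidableEq V] (G : SimpleGraph V)
    [DecidableRel G.Adj] (γ : V → ℝ) (U : V → ℝ → ℝ) (Vp : V → V → Polynomial ℝ)
    (hU : ∀ v, ContDiff ℝ (⊤ : ℕ∞) (U v))
    (hsym : ∀ u v, G.Adj u v → ∀ x : ℝ, (Vp v u).eval x = (Vp u v).eval (-x))
    (c : V) (x : Phase V) :
    ∃ a : ℝ, fderiv ℝ (X0 G γ U Vp) x (dq c x) = (0, fun v => if v = c then a else
      (if G.Adj c v then ft Vp c v else 0).eval (xv Vp c v x)) := by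
  have hd := (contDiff_X0 G γ U Vp hU).differentiable (by simp) x
  refine ⟨(fderiv ℝ (X0 G γ U Vp) x (dq c x)).2 c, ?_⟩
  have hl : HasDerivAt (fun t : ℝ => X0 G γ U Vp (x + t • dq c x))
      (fderiv ℝ (X0 G γ U Vp) x (dq c x)) 0 := by
    have := hd.hasFDerivAt.hasLineDerivAt (dq c x)
    exact this
  have h1 : HasDerivAt (fun t : ℝ => (X0 G γ U Vp (x + t • dq c x)).1)
      (fderiv ℝ (X0 G γ U Vp) x (dq c x)).1 0 := by
    simpa [Function.comp_def] using (hasFDerivAt_fst (𝕜 := ℝ)).comp_hasDerivAt (0 : ℝ) hl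
  have h2 : HasDerivAt (fun t : ℝ => (X0 G γ U Vp (x + t • dq c x)).2)
      (fderiv ℝ (X0 G γ U Vp) x (dq c x)).2 0 := by
    simpa [Function.comp_def] using (hasFDerivAt_snd (𝕜 := ℝ)).comp_hasDerivAt (0 : ℝ) hl
  refine Prod.ext ?_ (funext fun v => ?_)
  · refine h1.unique ?_
    simpa [X0, dq] using hasDerivAt_const (0 : ℝ) x.2
  · by_cases hv : v = c
    · simp [hv]
    · refine ((hasDerivAt_pi.1 h2) v).unique ?_
      simp only [hv, if_false]
      have hs : HasDerivAt (fun t : ℝ => ∑ w ∈ Finset.univ.filter (fun w => G.Adj v w),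
          (derivative (Vp v w)).eval (x.1 v - (x.1 w + t * (Pi.single c 1 : V → ℝ) w)))
          (∑ w ∈ Finset.univ.filter (fun w => G.Adj v w),
            (derivative (derivative (Vp v w))).eval (x.1 v - x.1 w) *
              (-(Pi.single c 1 : V → ℝ) w)) 0 := by
        refine HasDerivAt.fun_sum fun w _ => ?_
        have h0 : HasDerivAt (fun t : ℝ => x.1 v - (x.1 w + t * (Pi.single c 1 : V → ℝ) w))
            (-(Pi.single c 1 : V → ℝ) w) 0 := by
          simpa using (((hasDerivAt_id (0 : ℝ)).mul_const
            ((Pi.single c 1 : V → ℝ) w)).const_add (x.1 w)).const_sub (x.1 v)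
        have := ((derivative (Vp v w)).hasDerivAt
          (x.1 v - (x.1 w + 0 * (Pi.single c 1 : V → ℝ) w))).comp (0 : ℝ) h0
        simpa [Function.comp_def] using this
      have hval : (∑ w ∈ Finset.univ.filter (fun w => G.Adj v w),
            (derivative (derivative (Vp v w))).eval (x.1 v - x.1 w) *
              (-(Pi.single c 1 : V → ℝ) w)) =
          -((if G.Adj c v then ft Vp c v else 0).eval (xv Vp c v x)) := by
        rw [Finset.sum_filter, Finset.sum_eq_single c]
        · by_cases hcv : G.Adj c v
          · simp only [hcv, hcv.symm, if_true, xv, ft, eval_adjRep]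
            rw [eval_second_derivative_symm _ _ (hsym c v hcv)]
            simp
          · have : ¬ G.Adj v c := fun h => hcv h.symm
            simp [hcv, this]
        · intro w _ hw
          simp [hw]
        · simp
      rw [hval] at hs
      have := hs.const_sub (-(γ v) * x.2 v - deriv (U v) (x.1 v))
      simpa [X0, dq, hv] using this

/-! ### Families of polynomials whose field lies in `𝓜` -/

/-- `g` is an admissible family: it vanishes at `c`, and `∑_v g_v(x_v) ∂_{p_v}` lies in `𝓜`. -/
def Adm {V : Type} [Fintype V] [DecidableEq V] (Vstar : Finset V) (X₀ : Phase V → Phase V)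
    (Vp : V → V → Polynomial ℝ) (c : V) (g : V → Polynomial ℝ) : Prop :=
  g c = 0 ∧ MM Vstar X₀ (polyField Vp c g)

section

variable {V : Type} [Fintype V] [DecidableEq V] {Vstar : Finset V} {X₀ : Phase V → Phase V}
  {Vp : V → V → Polynomial ℝ} {c : V}

lemma Adm.zero (hc : Controllable Vstar X₀ c) : Adm Vstar X₀ Vp c 0 := by
  refine ⟨rfl, ?_⟩
  have := MM.smul (0 : ℝ) hc.2
  convert this using 1
  funext x
  ext v <;> simp [polyField]

lemma Adm.add {g h : V → Polynomial ℝ} (hg : Adm Vstar X₀ Vp c g) (hh : Adm Vstar X₀ Vp c h) :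
    Adm Vstar X₀ Vp c (g + h) := by
  refine ⟨by simp [hg.1, hh.1], ?_⟩
  convert MM.add hg.2 hh.2 using 1
  funext x
  ext v <;> simp [polyField]

lemma Adm.smul (a : ℝ) {g : V → Polynomial ℝ} (hg : Adm Vstar X₀ Vp c g) :
    Adm Vstar X₀ Vp c (a • g) := by
  refine ⟨by simp [hg.1], ?_⟩
  convert MM.smul a hg.2 using 1
  funext x
  ext v <;> simp [polyField]

lemma Adm.derivative (hc : Controllable Vstar X₀ c) {g : V → Polynomial ℝ}
    (hg : Adm Vstar X₀ Vp c g) : Adm Vstar X₀ Vp c (fun v => Polynomial.derivative (g v)) := by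
  refine ⟨by simp [hg.1], ?_⟩
  rw [← lieB_dq_polyField Vp c g hg.1]
  exact MM.lie hc.1 hg.2

lemma Adm.iterate_derivative (hc : Controllable Vstar X₀ c) {g : V → Polynomial ℝ}
    (hg : Adm Vstar X₀ Vp c g) (k : ℕ) :
    Adm Vstar X₀ Vp c (fun v => Polynomial.derivative^[k] (g v)) := by
  induction k with
  | zero => exact hg
  | succ k ih =>
    simp only [Function.iterate_succ_apply']
    exact ih.derivative hc

end

lemma Adm.mul_derivative {V : Type} [Fintype V] [DecidableEq V] {G : SimpleGraph V}
    [DecidableRel G.Adj] {Vstar : Finset V} {γ : V → ℝ} {U : V → ℝ → ℝ}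
    {Vp : V → V → Polynomial ℝ} (hU : ∀ v, ContDiff ℝ (⊤ : ℕ∞) (U v)) {c : V}
    {g h : V → Polynomial ℝ} (hg : Adm Vstar (X0 G γ U Vp) Vp c g)
    (hh : Adm Vstar (X0 G γ U Vp) Vp c h) :
    Adm Vstar (X0 G γ U Vp) Vp c (fun v => Polynomial.derivative (g v * h v)) := by
  refine ⟨by simp [hg.1], ?_⟩
  have h1 := MM.smul (-1 : ℝ) (MM.lie (MM.lieX hg.2) hh.2)
  rw [lieB_lieB_polyField G γ U Vp hU c g h hg.1 hh.1, smul_smul] at h1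
  simpa using h1

lemma adm_ft {V : Type} [Fintype V] [DecidableEq V] {G : SimpleGraph V}
    [DecidableRel G.Adj] {Vstar : Finset V} {γ : V → ℝ} {U : V → ℝ → ℝ}
    {Vp : V → V → Polynomial ℝ} (hU : ∀ v, ContDiff ℝ (⊤ : ℕ∞) (U v))
    (hsym : ∀ u v, G.Adj u v → ∀ x : ℝ, (Vp v u).eval x = (Vp u v).eval (-x)) {c : V}
    (hc : Controllable Vstar (X0 G γ U Vp) c) :
    Adm Vstar (X0 G γ U Vp) Vp c (fun v => if G.Adj c v then ft Vp c v else 0) := by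
  refine ⟨by simp, ?_⟩
  have hs : ContDiff ℝ (⊤ : ℕ∞)
      (fun x => -(fderiv ℝ (X0 G γ U Vp) x (dq c x)).2 c) := by
    have h1 : ContDiff ℝ (⊤ : ℕ∞) (fderiv ℝ (X0 G γ U Vp)) :=
      (contDiff_X0 G γ U Vp hU).fderiv_right (by simp)
    have h2 : ContDiff ℝ (⊤ : ℕ∞) (fun x => fderiv ℝ (X0 G γ U Vp) x (dq c x)) :=
      h1.clm_apply contDiff_const
    fun_prop
  -- remove the `∂_{p_c}`-component of `[∂_{q_c}, X₀]`
  have := MM.add (MM.lieX hc.1) (MM.mulS _ hs hc.2)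
  convert this using 1
  funext x
  obtain ⟨a, ha⟩ := fderiv_X0_dq G γ U Vp hU hsym c x
  simp only [Pi.add_apply, lieB, ha, fderiv_dq]
  ext v
  · simp [polyField, dp]
  · by_cases hv : v = c
    · subst hv; simp [polyField, dp]
    · simp [polyField, dp, hv]

/-! ### Adjusted polynomials -/

lemma adjRep_eq_taylor (g : Polynomial ℝ) : adjRep g = taylor (-adjShift g) g := by
  simp [adjRep, taylor_apply, sub_eq_add_neg]

lemma natDegree_adjRep (g : Polynomial ℝ) : (adjRep g).natDegree = g.natDegree := by
  rw [adjRep_eq_taylor, natDegree_taylor]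

lemma coeff_adjRep (g : Polynomial ℝ) (n : ℕ) (hn : g.natDegree = n + 1) :
    (adjRep g).coeff n = 0 := by
  have hg : g.coeff (n + 1) ≠ 0 := by
    rw [← hn]
    exact leadingCoeff_ne_zero.2 (by rintro rfl; simp at hn)
  have h1 : (hasseDeriv n g).natDegree ≤ 1 := by
    have := natDegree_hasseDeriv_le g n
    omega
  have hn' : ((n : ℝ) + 1) ≠ 0 := by positivity
  rw [adjRep_eq_taylor, taylor_coeff, eq_X_add_C_of_natDegree_le_one h1]
  simp only [hasseDeriv_coeff, adjShift, leadingCoeff, hn]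
  simp [add_comm 1 n, Nat.choose_succ_self_right]
  field_simp
  ring

lemma natDegree_ft {V : Type} (Vp : V → V → Polynomial ℝ) (c v : V) :
    (ft Vp c v).natDegree = (Vp c v).natDegree - 2 := by
  rw [ft, natDegree_adjRep, natDegree_derivative, natDegree_derivative]
  omega

lemma coeff_ft {V : Type} (Vp : V → V → Polynomial ℝ) (c v : V) (n : ℕ)
    (hn : (ft Vp c v).natDegree = n + 1) : (ft Vp c v).coeff n = 0 :=
  coeff_adjRep _ n (by rwa [ft, natDegree_adjRep] at hn)

/-- The family equal to `X` on `D^d` and to `0` elsewhere is admissible. With `n = d - 1`, the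
`n`-th derivative `h` of the family `f̃` is affine: `b_v X` with `b_v ≠ 0` on `D^d`, and constant
elsewhere. Products `(h h)'` kill the constants and produce `b_v ^ k X` for `k ≥ 2`; interpolation
of `t ↦ t⁻²` at the values `b_v` removes the coefficients. -/
lemma adm_X {V : Type} [Fintype V] [DecidableEq V] {G : SimpleGraph V}
    [DecidableRel G.Adj] {Vstar : Finset V} {γ : V → ℝ} {U : V → ℝ → ℝ}
    {Vp : V → V → Polynomial ℝ} (hU : ∀ v, ContDiff ℝ (⊤ : ℕ∞) (U v))
    (hsym : ∀ u v, G.Adj u v → ∀ x : ℝ, (Vp v u).eval x = (Vp u v).eval (-x)) {c : V}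
    (hc : Controllable Vstar (X0 G γ U Vp) c) (n : ℕ) (hn : dmax G Vp c = n + 1) :
    Adm Vstar (X0 G γ U Vp) Vp c (fun v => if v ∈ Dd G Vp c then X else 0) := by
  have hh := (adm_ft hU hsym hc).iterate_derivative hc n
  set h : V → Polynomial ℝ :=
    fun v => derivative^[n] (if G.Adj c v then ft Vp c v else 0) with hh_def
  have hle : ∀ v, G.Adj c v → (ft Vp c v).natDegree ≤ n + 1 := fun v hv => by
    rw [← hn]
    exact Finset.le_sup (f := fun v => (ft Vp c v).natDegree) (by simpa [Tset] using hv)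
  have hD : ∀ v, v ∈ Dd G Vp c → ∃ b : ℝ, b ≠ 0 ∧ h v = C b * X := by
    intro v hv
    simp only [Dd, Tset, Finset.mem_filter, Finset.mem_univ, true_and, hn] at hv
    have h1 : (h v).natDegree ≤ 1 := by
      have := natDegree_iterate_derivative (ft Vp c v) n
      simp only [hh_def, hv.1, if_true]
      omega
    have hlead : (ft Vp c v).coeff (1 + n) ≠ 0 := by
      rw [add_comm, ← hv.2]
      exact leadingCoeff_ne_zero.2 (by intro h0; simp [h0] at hv)
    refine ⟨(h v).coeff 1, ?_, ?_⟩
    · simp only [hh_def, hv.1, if_true, coeff_iterate_derivative]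
      exact smul_ne_zero (Nat.descFactorial_pos.2 (by omega)).ne' hlead
    · have h0 : (h v).coeff 0 = 0 := by
        simp [hh_def, hv.1, coeff_iterate_derivative, coeff_ft Vp c v n hv.2]
      conv_lhs => rw [eq_X_add_C_of_natDegree_le_one h1, h0]
      simp
  have hN : ∀ v, v ∉ Dd G Vp c → derivative (h v) = 0 := by
    intro v hv
    by_cases hcv : G.Adj c v
    · have h1 : (h v).natDegree = 0 := by
        have := natDegree_iterate_derivative (ft Vp c v) n
        have h2 := hle v hcv
        have h3 : (ft Vp c v).natDegree ≠ n + 1 := fun h4 => hv (by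
          simp [Dd, Tset, hcv, hn, h4])
        simp only [hh_def, hcv, if_true]
        omega
      rw [eq_C_of_natDegree_eq_zero h1, derivative_C]
    · simp [hh_def, hcv]
  choose! b hb0 hb using hD
  have hpow : ∀ k : ℕ, Adm Vstar (X0 G γ U Vp) Vp c
      (fun v => if v ∈ Dd G Vp c then C (b v ^ (k + 2)) * X else 0) := by
    intro k
    induction k with
    | zero =>
      have := (hh.mul_derivative hU hh).smul (1 / 2 : ℝ)
      convert this using 1
      funext v
      by_cases hv : v ∈ Dd G Vp c
      · simp only [hv, if_true, Pi.smul_apply, hb v hv, smul_eq_C_mul]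
        refine Polynomial.funext fun t => ?_
        simp
        ring
      · simp [hv, hN v hv]
    | succ k ih =>
      have := (ih.mul_derivative hU hh).smul (1 / 2 : ℝ)
      convert this using 1
      funext v
      by_cases hv : v ∈ Dd G Vp c
      · simp only [hv, if_true, Pi.smul_apply, hb v hv, smul_eq_C_mul]
        rw [show k + 1 + 2 = (k + 2) + 1 by ring, pow_succ]
        generalize b v ^ (k + 2) = e
        refine Polynomial.funext fun t => ?_
        simp
        ring
      · simp [hv]
  have hpoly : ∀ p : Polynomial ℝ, Adm Vstar (X0 G γ U Vp) Vp c
      (fun v => if v ∈ Dd G Vp c then C (p.eval (b v) * b v ^ 2) * X else 0) := by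
    intro p
    induction p using Polynomial.induction_on' with
    | add p q hp hq =>
      convert hp.add hq using 1
      funext v
      by_cases hv : v ∈ Dd G Vp c <;> simp [hv, add_mul]
    | monomial k a =>
      convert (hpow k).smul a using 1
      funext v
      by_cases hv : v ∈ Dd G Vp c
      · simp [hv, smul_eq_C_mul, pow_add, mul_assoc]
      · simp [hv]
  convert hpoly (Lagrange.interpolate ((Dd G Vp c).image b) id (fun t => (t ^ 2)⁻¹)) using 1
  funext v
  by_cases hv : v ∈ Dd G Vp c
  · have := Lagrange.eval_interpolate_at_node (s := (Dd G Vp c).image b) (v := id)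
      (fun t : ℝ => (t ^ 2)⁻¹) (Set.injOn_id _) (Finset.mem_image_of_mem b hv)
    simp only [id] at this
    simp only [hv, if_true]
    erw [this]
    rw [inv_mul_cancel₀ (pow_ne_zero 2 (hb0 v hv))]
    simp
  · simp [hv]

lemma coe_Gop_pow (d k : ℕ) (p : Polynomial.degreeLE ℝ (d : ℕ)) :
    (((Gop d ^ k) p : Polynomial.degreeLE ℝ (d : ℕ)) : Polynomial ℝ) =
      (fun q : Polynomial ℝ => derivative (X * q))^[k] (p : Polynomial ℝ) := by
  induction k with
  | zero => simp
  | succ k ih =>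
    rw [Function.iterate_succ_apply', ← ih, pow_succ']
    rfl

/-- Lemma 4.10. Assume `c` is controllable. Then for every operator
`P ∈ 𝓕 = span{G, G², …, G^{d+1}}` of `P_d`, the vector field
`∑_{v∈D^d} (P f̃_v)(x_v) ∂_{p_v}` belongs to `𝓜`. -/
theorem operator_field_mem
    {V : Type} [Fintype V] [DecidableEq V] (G : SimpleGraph V) [DecidableRel G.Adj]
    (Vstar : Finset V) (γ : V → ℝ) (U : V → ℝ → ℝ) (Vp : V → V → Polynomial ℝ)
    (hγpos : ∀ v ∈ Vstar, 0 < γ v) (hγ0 : ∀ v ∉ Vstar, γ v = 0)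
    (hU : ∀ v, ContDiff ℝ (⊤ : ℕ∞) (U v))
    (hsym : ∀ u v, G.Adj u v → ∀ x : ℝ, (Vp v u).eval x = (Vp u v).eval (-x))
    (hdeg : ∀ u v, G.Adj u v → 3 ≤ (Vp u v).natDegree)
    (c : V) (hc : Controllable Vstar (X0 G γ U Vp) c)
    (P : Module.End ℝ (Polynomial.degreeLE ℝ ((dmax G Vp c : ℕ) : WithBot ℕ)))
    (hP : P ∈ Fspan (dmax G Vp c)) :
    MM Vstar (X0 G γ U Vp)
      (fun x => ((0 : V → ℝ),
        ∑ v ∈ Dd G Vp c,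
          Pi.single v ((P (ftSub G Vp c v) : Polynomial ℝ).eval (xv Vp c v x)))) := by

  suffices h : Adm Vstar (X0 G γ U Vp) Vp c
      (fun v => if v ∈ Dd G Vp c then (P (ftSub G Vp c v) : Polynomial ℝ) else 0) by
    convert h.2 using 1
    funext x
    refine Prod.ext rfl (funext fun w => ?_)
    by_cases hw : w ∈ Dd G Vp c <;> simp [polyField, hw, Finset.sum_apply, Pi.single_apply]
  have hft : ∀ v ∈ Dd G Vp c, (ftSub G Vp c v : Polynomial ℝ) = ft Vp c v := fun v hv => by
    have : (ft Vp c v).degree ≤ ((dmax G Vp c : ℕ) : WithBot ℕ) := by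
      rw [← (Finset.mem_filter.1 hv).2]
      exact degree_le_natDegree
    rw [ftSub, dif_pos this]
  unfold Fspan at hP
  induction hP using Submodule.span_induction with
  | zero =>
    convert Adm.zero hc using 1
    funext v
    simp
  | add P Q _ _ hP hQ =>
    convert hP.add hQ using 1
    funext v
    by_cases hv : v ∈ Dd G Vp c <;> simp [hv]
  | smul a P _ hP =>
    convert hP.smul a using 1
    funext v
    by_cases hv : v ∈ Dd G Vp c <;> simp [hv]
  | mem P hP =>
    obtain ⟨k, hk, rfl⟩ := hP
    simp only [coe_Gop_pow]
    rcases Nat.eq_zero_or_pos (dmax G Vp c) with h0 | h0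
    · -- every `f̃_v` has positive degree, so here `D^d` is empty
      convert Adm.zero hc using 1
      funext v
      have hv : v ∉ Dd G Vp c := fun hv => by
        simp only [Dd, Tset, Finset.mem_filter, Finset.mem_univ, true_and] at hv
        have := hdeg c v hv.1
        have := natDegree_ft Vp c v
        omega
      simp [hv]
    · obtain ⟨n, hn⟩ := Nat.exists_eq_succ_of_ne_zero h0.ne'
      have hX := adm_X hU hsym hc n hn
      obtain ⟨k, rfl⟩ := Nat.exists_eq_succ_of_ne_zero (Nat.one_le_iff_ne_zero.1 hk.1)
      clear hk
      induction k with
      | zero =>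
        convert hX.mul_derivative hU (adm_ft hU hsym hc) using 1
        funext v
        by_cases hv : v ∈ Dd G Vp c
        · have hcv : G.Adj c v := by
            simpa [Tset] using (Finset.mem_filter.1 hv).1
          simp [hv, hcv, hft v hv]
        · simp [hv]
      | succ k ih =>
        convert hX.mul_derivative hU ih using 1
        funext v
        by_cases hv : v ∈ Dd G Vp c
        · rw [Function.iterate_succ_apply']
          simp [hv]
        · simp [hv]
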